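/- For every integer p ≥ 1, Σ_{j=1}^{p} S(p+1, p−j) H_j/j! = ( p! − (p+1)p^p + p^{p+1} H_p ) / p!. -/

import Mathlib

/-- Stirling numbers of the second kind. -/
def stirling2 (n k : ℕ) : ℚ :=
  (1 / (Nat.factorial k : ℚ)) *
    ∑ j ∈ Finset.range (k + 1), (-1 : ℚ) ^ (k - j) * (Nat.choose k j : ℚ) * (j : ℚ) ^ n

/-- Harmonic numbers. -/
def harmonic' (n : ℕ) : ℚ := ∑ j ∈ Finset.Icc 1 n, (1 : ℚ) / (j : ℚ)

/-!
Up to the factor `k!`, the Stirling number `S(n, k)` is the `k`-th forward difference of `x ^ n`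
at `0`. In the binomial convolution `∑ C(p, i) (Δ ^ i f)(0) H_(p - i)` with `f x = x ^ n` the
differences can be moved onto the harmonic numbers, giving `∑ C(p, i) f(i) (Δ ^ (p - i) H)(0)`.
Now write `f(i) = f(p) - (p - i) g(i)`, where `g` is the divided difference
`∑ a < n, x ^ a * p ^ (n - 1 - a)`. The constant `f(p)` contributes `f(p) H_p` by the Gregory-Newton
formula. Since `(Δ ^ j H)(0) = -(-1) ^ j / j` for `j > 0`, the factor `p - i` cancels, and the
remaining alternating sum is `(Δ ^ p g)(0) - g(p)`. For `n = p + 1` only the leading term of `g`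
survives `Δ ^ p`, and it contributes `p!`.
-/

open Finset fwdDiff
open scoped Nat

/-- With `E` the shift operators, both sides expand `(E ⊗ 1 + 1 ⊗ E - 1) ^ n`, read as
`(Δ ⊗ 1 + 1 ⊗ E) ^ n` on the left and as `(E ⊗ 1 + 1 ⊗ Δ) ^ n` on the right. -/
theorem sum_antidiagonal_choose_mul_fwdDiff_iter_mul {M N R : Type*} [AddCommMonoid M]
    [AddCommMonoid N] [Ring R] (h : M) (k : N) (f : M → R) (g : N → R) (x : M) (y : N) (n : ℕ) :
    ∑ ij ∈ antidiagonal n, (n.choose ij.1 : R) * (Δ_[h] ^[ij.1] f x * g (y + ij.2 • k)) =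
      ∑ ij ∈ antidiagonal n, (n.choose ij.1 : R) * (f (x + ij.1 • h) * Δ_[k] ^[ij.2] g y) := by
  induction n generalizing f g with
  | zero => simp
  | succ n ih =>
    have choose_snd (F : ℕ → ℕ → R) :
        ∑ ij ∈ antidiagonal n, (n.choose ij.2 : R) * F ij.1 ij.2 =
          ∑ ij ∈ antidiagonal n, (n.choose ij.1 : R) * F ij.1 ij.2 :=
      sum_congr rfl fun ij hij ↦ by
        rw [Nat.choose_symm_of_eq_add (mem_antidiagonal.1 hij).symm]
    have shift_f (i : ℕ) : f (x + (i + 1) • h) = f (x + i • h) + Δ_[h] f (x + i • h) := by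
      simp [fwdDiff, succ_nsmul, add_assoc]
    have shift_g (j : ℕ) : g (y + (j + 1) • k) = g (y + j • k) + Δ_[k] g (y + j • k) := by
      simp [fwdDiff, succ_nsmul, add_assoc]
    rw [sum_antidiagonal_choose_succ_mul (fun i j ↦ Δ_[h] ^[i] f x * g (y + j • k)),
      sum_antidiagonal_choose_succ_mul (fun i j ↦ f (x + i • h) * Δ_[k] ^[j] g y),
      choose_snd (fun i j ↦ Δ_[h] ^[i + 1] f x * g (y + j • k)),
      choose_snd (fun i j ↦ f (x + (i + 1) • h) * Δ_[k] ^[j] g y)]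
    simp only [shift_f, shift_g, Function.iterate_succ_apply, mul_add, add_mul, sum_add_distrib, ih]
    abel

theorem sum_antidiagonal_choose_mul_fwdDiff_iter {M R : Type*} [AddCommMonoid M] [Ring R]
    (h : M) (f : M → R) (n : ℕ) (x : M) :
    ∑ ij ∈ antidiagonal n, (n.choose ij.1 : R) * Δ_[h] ^[ij.2] f x = f (x + n • h) := by
  rw [shift_eq_sum_fwdDiff_iter h f n x, ← Nat.sum_antidiagonal_swap,
    Nat.sum_antidiagonal_eq_sum_range_succ_mk]
  refine sum_congr rfl fun j hj ↦ ?_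
  rw [Prod.fst_swap, Prod.snd_swap, Nat.choose_symm (mem_range_succ_iff.1 hj), nsmul_eq_mul]

theorem fwdDiff_iter_eq_sum_antidiagonal {M R : Type*} [AddCommMonoid M] [Ring R]
    (h : M) (f : M → R) (n : ℕ) (x : M) :
    Δ_[h] ^[n] f x =
      ∑ ij ∈ antidiagonal n, (n.choose ij.1 : R) * ((-1) ^ ij.2 * f (x + ij.1 • h)) := by
  rw [Nat.sum_antidiagonal_eq_sum_range_succ_mk, fwdDiff_iter_eq_sum_shift]
  refine sum_congr rfl fun i _ ↦ ?_
  rw [zsmul_eq_mul, ← mul_assoc, (Nat.cast_commute _ _).eq]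
  norm_cast

theorem fwdDiff_iter_inv {K : Type*} [Field K] (h : K) (n : ℕ) {x : K}
    (hx : ∀ k ≤ n, x + k * h ≠ 0) :
    Δ_[h] ^[n] (fun y : K ↦ y⁻¹) x =
      (-1) ^ n * n ! * h ^ n / ∏ k ∈ range (n + 1), (x + k * h) := by
  induction n generalizing x with
  | zero => simp
  | succ n ih =>
    have hx' : ∀ k ≤ n, x + h + k * h ≠ 0 := fun k hk ↦ by
      convert hx (k + 1) (by lia) using 1
      push_cast
      ring
    set P := ∏ k ∈ range n, (x + (k + 1 : ℕ) * h) with hP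
    have prod_init : ∏ k ∈ range (n + 1), (x + k * h) = P * x := by
      simp [hP, prod_range_succ']
    have prod_tail : ∏ k ∈ range (n + 1), (x + h + k * h) = P * (x + (n + 1 : ℕ) * h) := by
      rw [hP, ← prod_range_succ (fun k ↦ x + (k + 1 : ℕ) * h)]
      exact prod_congr rfl fun k _ ↦ by push_cast; ring
    have P_ne : P ≠ 0 :=
      prod_ne_zero_iff.2 fun k hk ↦ hx (k + 1) (by have := mem_range.1 hk; lia)
    have first_ne : x ≠ 0 := by simpa using hx 0 (by lia)
    have last_ne : x + (n + 1 : ℕ) * h ≠ 0 := hx (n + 1) le_rfl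
    rw [Function.iterate_succ_apply', fwdDiff, ih hx', ih fun k hk ↦ hx k (by lia),
      prod_range_succ _ (n + 1), prod_init, prod_tail, Nat.factorial_succ]
    field_simp
    push_cast
    ring

theorem harmonic'_eq_harmonic (n : ℕ) : harmonic' n = harmonic n := by
  simp only [harmonic', harmonic_eq_sum_Icc, one_div]

theorem fwdDiff_harmonic : Δ_[1] harmonic = fun n : ℕ ↦ ((n : ℚ) + 1)⁻¹ := by
  ext n
  simp [fwdDiff]

theorem fwdDiff_iter_succ_harmonic_zero (n : ℕ) :
    Δ_[1] ^[n + 1] harmonic 0 = (-1) ^ n / (n + 1) := by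
  have restrict : Δ_[1] ^[n] (fun k : ℕ ↦ ((k : ℚ) + 1)⁻¹) 0 = Δ_[1] ^[n] (fun y : ℚ ↦ y⁻¹) 1 := by
    simp [fwdDiff_iter_eq_sum_shift, add_comm]
  have prod_eq : ∏ k ∈ range (n + 1), (1 + (k : ℚ) * 1) = (n + 1) * n ! := by
    rw [← Nat.cast_succ, ← Nat.cast_mul, ← Nat.factorial_succ, ← prod_range_add_one_eq_factorial]
    push_cast
    exact prod_congr rfl fun k _ ↦ by ring
  rw [Function.iterate_succ_apply, fwdDiff_harmonic, restrict,
    fwdDiff_iter_inv 1 n fun k _ ↦ by positivity, prod_eq, one_pow]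
  field_simp

theorem natCast_mul_fwdDiff_iter_harmonic_zero (n : ℕ) :
    n * Δ_[1] ^[n] harmonic 0 = (if n = 0 then 1 else 0) - (-1) ^ n := by
  cases n with
  | zero => simp
  | succ n =>
    rw [fwdDiff_iter_succ_harmonic_zero, if_neg n.succ_ne_zero]
    push_cast
    field_simp
    ring

theorem sum_antidiagonal_choose_mul_fwdDiff_iter_harmonic {f g : ℚ → ℚ} {p : ℕ}
    (hfg : ∀ x, f p - f x = (p - x) * g x) :
    ∑ ij ∈ antidiagonal p, (p.choose ij.1 : ℚ) * (f ij.1 * Δ_[1] ^[ij.2] harmonic 0) =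
      f p * harmonic p + Δ_[1] ^[p] g 0 - g p := by
  have newton : ∑ ij ∈ antidiagonal p, (p.choose ij.1 : ℚ) * Δ_[1] ^[ij.2] harmonic 0 =
      harmonic p := by
    simpa using sum_antidiagonal_choose_mul_fwdDiff_iter 1 harmonic p 0
  have alternating : ∑ ij ∈ antidiagonal p, (p.choose ij.1 : ℚ) * ((-1) ^ ij.2 * g ij.1) =
      Δ_[1] ^[p] g 0 := by
    simp [fwdDiff_iter_eq_sum_antidiagonal]
  have diagonal : ∑ ij ∈ antidiagonal p,
      (p.choose ij.1 : ℚ) * ((if ij.2 = 0 then 1 else 0) * g ij.1) = g p := by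
    rw [sum_eq_single_of_mem (p, 0) (by simp)]
    · simp
    · rintro ⟨i, j⟩ hij hne
      have j_ne : j ≠ 0 := by
        rintro rfl
        exact hne (by simpa using mem_antidiagonal.1 hij)
      simp [j_ne]
  rw [← newton, ← alternating, ← diagonal, mul_sum, ← sum_add_distrib, ← sum_sub_distrib]
  refine sum_congr rfl fun ij hij ↦ ?_
  have hsub : (p : ℚ) - ij.1 = ij.2 := by
    rw [← mem_antidiagonal.1 hij]
    simp
  linear_combination (-(p.choose ij.1 : ℚ) * Δ_[1] ^[ij.2] harmonic 0) * hfg ij.1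
    - (p.choose ij.1 : ℚ) * g ij.1 * natCast_mul_fwdDiff_iter_harmonic_zero ij.2
    - (p.choose ij.1 : ℚ) * Δ_[1] ^[ij.2] harmonic 0 * g ij.1 * hsub

theorem factorial_mul_stirling2 (n k : ℕ) :
    k ! * stirling2 n k = Δ_[1] ^[k] (fun x : ℚ ↦ x ^ n) 0 := by
  rw [stirling2, ← mul_assoc, mul_one_div_cancel (by positivity), one_mul,
    fwdDiff_iter_eq_sum_shift]
  simp

theorem stirling2_eq_zero_of_lt {n k : ℕ} (h : n < k) : stirling2 n k = 0 := by
  have diff_eq := factorial_mul_stirling2 n k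
  rw [fwdDiff_iter_pow_eq_zero_of_lt h] at diff_eq
  simpa [k.factorial_ne_zero] using diff_eq

theorem stirling2_self (n : ℕ) : stirling2 n n = 1 := by
  have diff_eq := factorial_mul_stirling2 n n
  rw [fwdDiff_iter_eq_factorial] at diff_eq
  simpa [n.factorial_ne_zero] using diff_eq

theorem sum_range_succ_stirling2_mul (c : ℕ → ℚ) (k : ℕ) :
    ∑ n ∈ range (k + 1), stirling2 n k * c n = c k := by
  rw [sum_range_succ, stirling2_self, one_mul, add_eq_right]
  exact sum_eq_zero fun n hn ↦ by rw [stirling2_eq_zero_of_lt (mem_range.1 hn), zero_mul]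

theorem fwdDiff_iter_sum_pow_mul_zero (s : Finset ℕ) (c : ℕ → ℚ) (k : ℕ) :
    Δ_[1] ^[k] (fun x : ℚ ↦ ∑ a ∈ s, x ^ a * c a) 0 = k ! * ∑ a ∈ s, stirling2 a k * c a := by
  have linear_comb : (fun x : ℚ ↦ ∑ a ∈ s, x ^ a * c a) = ∑ a ∈ s, c a • fun x : ℚ ↦ x ^ a := by
    ext x
    simp [mul_comm]
  simp only [linear_comb, fwdDiff_iter_finsetSum, fwdDiff_iter_const_smul,
    Finset.sum_apply, Pi.smul_apply, ← factorial_mul_stirling2, smul_eq_mul, mul_sum]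
  exact sum_congr rfl fun a _ ↦ by ring

theorem sum_antidiagonal_stirling2_mul_div_factorial (a : ℕ → ℚ) (n p : ℕ) :
    p ! * ∑ ij ∈ antidiagonal p, stirling2 n ij.1 * a ij.2 / ij.2 ! =
      ∑ ij ∈ antidiagonal p, (p.choose ij.1 : ℚ) * ((ij.1 : ℚ) ^ n * Δ_[1] ^[ij.2] a 0) := by
  have swap := sum_antidiagonal_choose_mul_fwdDiff_iter_mul (1 : ℚ) 1 (fun x ↦ x ^ n) a 0 0 p
  simp only [nsmul_eq_mul, mul_one, zero_add, Nat.cast_id] at swap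
  rw [← swap, mul_sum]
  refine sum_congr rfl fun ij hij ↦ ?_
  have factorial_eq : (p ! : ℚ) = p.choose ij.1 * ij.1 ! * ij.2 ! := by
    rw [← mem_antidiagonal.1 hij, Nat.choose_symm_add]
    exact_mod_cast (Nat.add_choose_mul_factorial_mul_factorial ij.1 ij.2).symm
  rw [← factorial_mul_stirling2, factorial_eq]
  field_simp

/-- At `n = 0` the truncated exponents `n - 1` occur only in an empty sum and next to the factor
`n`. -/
theorem sum_harmonic_stirling2_general (n p : ℕ) :
    ∑ j ∈ Icc 1 p, stirling2 n (p - j) * harmonic' j / (j ! : ℚ) =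
      (p ! * ∑ a ∈ range n, stirling2 a p * (p : ℚ) ^ (n - 1 - a) - n * (p : ℚ) ^ (n - 1) +
        (p : ℚ) ^ n * harmonic' p) / p ! := by
  have antidiagonal_sum : ∑ j ∈ Icc 1 p, stirling2 n (p - j) * harmonic' j / (j ! : ℚ) =
      ∑ ij ∈ antidiagonal p, stirling2 n ij.1 * harmonic ij.2 / ij.2 ! := by
    rw [← Nat.sum_antidiagonal_swap, Nat.sum_antidiagonal_eq_sum_range_succ_mk,
      sum_range_eq_add_Ico _ p.succ_pos, ← Ico_add_one_right_eq_Icc]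
    simp [harmonic'_eq_harmonic]
  have divided_difference (x : ℚ) : (p : ℚ) ^ n - x ^ n =
      (p - x) * ∑ a ∈ range n, x ^ a * (p : ℚ) ^ (n - 1 - a) := by
    linear_combination (Commute.all x p).mul_geom_sum₂ n
  rw [antidiagonal_sum, eq_div_iff (by positivity), mul_comm,
    sum_antidiagonal_stirling2_mul_div_factorial,
    sum_antidiagonal_choose_mul_fwdDiff_iter_harmonic (f := fun x ↦ x ^ n) divided_difference,
    fwdDiff_iter_sum_pow_mul_zero, geom_sum₂_self, harmonic'_eq_harmonic]
  ring

theorem sum_harmonic_stirling2 (p : ℕ) (hp : 1 ≤ p) :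
    ∑ j ∈ Finset.Icc 1 p, stirling2 (p + 1) (p - j) * harmonic' j / (Nat.factorial j : ℚ) =
      ((Nat.factorial p : ℚ) - ((p : ℚ) + 1) * (p : ℚ) ^ p + (p : ℚ) ^ (p + 1) * harmonic' p) /
        (Nat.factorial p : ℚ) := by
  rw [sum_harmonic_stirling2_general, sum_range_succ_stirling2_mul]
  simp
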